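/- Under the LEN setup, assume F is μ-strongly monotone for some μ > 0, F' is L-Lipschitz, M ≥ 4mL, and z* ∈ E satisfies F(z*) = 0. Then for every integer T ≥ 1, the averaged output z_out := (Σ_{t=0}^{T−1} η_t z_{t+1/2}) / (Σ_{t=0}^{T−1} η_t) satisfies μ·‖z_out − z*‖² ≤ M·‖z_0 − z*‖³ / T^{3/2}. -/

import Mathlib

open scoped RealInnerProductSpace

/-!
Put `r t = ‖z t - w t‖` and `e t = ‖z (t + 1) - w t‖`. An extragradient step satisfies
`2 η t ⟪F (w t), w t - u⟫ = ‖z t - u‖² - ‖z (t + 1) - u‖² + (e t)² - (r t)²`,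
so everything rests on absorbing `∑ (e t)²` into `∑ (r t)²`. The Newton equation and the Lipschitz
bound on `F'` give `4 m e t ≤ r t + s t`, where `s t` is the distance from `z t` to the iterate at
which the derivative was last evaluated. As `s t` is at most a sum of fewer than `m` consecutive
increments of `z`, each at most `r + e`, Cauchy–Schwarz yields `∑ s² ≤ 2 m² ∑ (r² + e²)`, whence
`∑ e² ≤ ½ ∑ r²`. Telescoping bounds both the weighted gap and `∑ r²` by multiples of `‖z 0 - u‖²`.
As `M η t = 1 / r t`, the bound on `∑ r²` forces `∑ η t` to grow like `T ^ (3 / 2)`, and Jensen's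
inequality passes to the averaged output.
-/

section Sums

open Finset

theorem card_pow_three_le_sum_inv_sq_mul_sum_sq {ι R : Type*} [Field R] [LinearOrder R]
    [IsStrictOrderedRing R] (s : Finset ι) {r : ι → R} (hr : ∀ i ∈ s, 0 < r i) :
    (#s : R) ^ 3 ≤ (∑ i ∈ s, (r i)⁻¹) ^ 2 * ∑ i ∈ s, r i ^ 2 := by
  rcases s.eq_empty_or_nonempty with rfl | hs
  · simp
  have hcard : (0 : R) < #s := by exact_mod_cast hs.card_pos
  have hcauchy : (#s : R) ^ 2 ≤ (∑ i ∈ s, (r i)⁻¹) * ∑ i ∈ s, r i := by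
    simpa using sum_sq_le_sum_mul_sum_of_sq_le_mul s (r := fun _ ↦ (1 : R))
      (fun i hi ↦ (inv_pos.2 (hr i hi)).le) (fun i hi ↦ (hr i hi).le)
      (fun i hi ↦ by rw [one_pow, inv_mul_cancel₀ (hr i hi).ne'])
  refine le_of_mul_le_mul_left ?_ hcard
  calc (#s : R) * #s ^ 3 = (#s ^ 2) ^ 2 := by ring
    _ ≤ ((∑ i ∈ s, (r i)⁻¹) * ∑ i ∈ s, r i) ^ 2 := by gcongr
    _ = (∑ i ∈ s, (r i)⁻¹) ^ 2 * (∑ i ∈ s, r i) ^ 2 := mul_pow _ _ _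
    _ ≤ (∑ i ∈ s, (r i)⁻¹) ^ 2 * (#s * ∑ i ∈ s, r i ^ 2) := by
      gcongr; exact sq_sum_le_card_mul_sum_sq
    _ = #s * ((∑ i ∈ s, (r i)⁻¹) ^ 2 * ∑ i ∈ s, r i ^ 2) := by ring

theorem sum_sum_Ico_sub_le {R : Type*} [Semiring R] [PartialOrder R] [IsOrderedRing R]
    {f : ℕ → R} (hf : ∀ i, 0 ≤ f i) (m T : ℕ) :
    ∑ t ∈ range T, ∑ i ∈ Ico (t - m) t, f i ≤ m * ∑ i ∈ range T, f i := by
  have hswap : ∑ t ∈ range T, ∑ i ∈ Ico (t - m) t, f i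
      = ∑ i ∈ range T, ∑ _t ∈ Ioc i (i + m) with _t < T, f i :=
    sum_comm' fun t i ↦ by simp only [mem_range, mem_Ico, mem_filter, mem_Ioc]; omega
  rw [hswap, mul_sum]
  refine sum_le_sum fun i _ ↦ ?_
  have hcard : #{t ∈ Ioc i (i + m) | t < T} ≤ m := by
    simpa using card_filter_le (Ioc i (i + m)) (· < T)
  rw [sum_const, nsmul_eq_mul]
  gcongr
  exact hf i

theorem sum_dist_sq_block_start_le {X : Type*} [PseudoMetricSpace X] (u : ℕ → X) {m : ℕ}
    (hm : 0 < m) (T : ℕ) :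
    ∑ t ∈ range T, dist (u (m * (t / m))) (u t) ^ 2
      ≤ m ^ 2 * ∑ t ∈ range T, dist (u t) (u (t + 1)) ^ 2 := by
  have hblock (t : ℕ) : dist (u (m * (t / m))) (u t) ^ 2
      ≤ m * ∑ i ∈ Ico (t - m) t, dist (u i) (u (i + 1)) ^ 2 := by
    have hmod := Nat.mod_lt t hm
    have hdiv := Nat.div_add_mod t m
    calc dist (u (m * (t / m))) (u t) ^ 2
        ≤ (∑ i ∈ Ico (m * (t / m)) t, dist (u i) (u (i + 1))) ^ 2 := by
          gcongr; exact dist_le_Ico_sum_dist u (Nat.mul_div_le t m)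
      _ ≤ #(Ico (m * (t / m)) t) * ∑ i ∈ Ico (m * (t / m)) t, dist (u i) (u (i + 1)) ^ 2 :=
          sq_sum_le_card_mul_sum_sq
      _ ≤ m * ∑ i ∈ Ico (t - m) t, dist (u i) (u (i + 1)) ^ 2 := by
          gcongr
          · rw [Nat.card_Ico]; omega
          · omega
  calc ∑ t ∈ range T, dist (u (m * (t / m))) (u t) ^ 2
      ≤ m * ∑ t ∈ range T, ∑ i ∈ Ico (t - m) t, dist (u i) (u (i + 1)) ^ 2 := by
        rw [mul_sum]; exact sum_le_sum fun t _ ↦ hblock t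
    _ ≤ m * (m * ∑ t ∈ range T, dist (u t) (u (t + 1)) ^ 2) := by
        gcongr; exact sum_sum_Ico_sub_le (fun _ ↦ sq_nonneg _) m T
    _ = m ^ 2 * ∑ t ∈ range T, dist (u t) (u (t + 1)) ^ 2 := by ring

theorem two_mul_sum_dist_sq_le_of_block_start {X : Type*} [PseudoMetricSpace X] (z w : ℕ → X)
    {m : ℕ} (hm : 0 < m)
    (h : ∀ t, 4 * m * dist (z (t + 1)) (w t) ≤ dist (z t) (w t) + dist (z (m * (t / m))) (z t))
    (T : ℕ) :
    2 * ∑ t ∈ range T, dist (z (t + 1)) (w t) ^ 2 ≤ ∑ t ∈ range T, dist (z t) (w t) ^ 2 := by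
  set R := ∑ t ∈ range T, dist (z t) (w t) ^ 2
  set D := ∑ t ∈ range T, dist (z (t + 1)) (w t) ^ 2
  set S := ∑ t ∈ range T, dist (z (m * (t / m))) (z t) ^ 2
  have hD : 16 * m ^ 2 * D ≤ 2 * (R + S) := by
    simp only [D, R, S, mul_sum, ← sum_add_distrib]
    refine sum_le_sum fun t _ ↦ ?_
    calc 16 * (m : ℝ) ^ 2 * dist (z (t + 1)) (w t) ^ 2
        = (4 * m * dist (z (t + 1)) (w t)) ^ 2 := by ring
      _ ≤ (dist (z t) (w t) + dist (z (m * (t / m))) (z t)) ^ 2 := by gcongr; exact h t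
      _ ≤ _ := add_sq_le
  have hincrement : ∑ t ∈ range T, dist (z t) (z (t + 1)) ^ 2 ≤ 2 * (R + D) := by
    simp only [D, R, mul_sum, ← sum_add_distrib]
    refine sum_le_sum fun t _ ↦ ?_
    calc dist (z t) (z (t + 1)) ^ 2
        ≤ (dist (z t) (w t) + dist (z (t + 1)) (w t)) ^ 2 := by
          gcongr; exact dist_triangle_right _ _ _
      _ ≤ _ := add_sq_le
  have hS : S ≤ m ^ 2 * (2 * (R + D)) :=
    (sum_dist_sq_block_start_le z hm T).trans (by gcongr)
  have hR : R ≤ m ^ 2 * R :=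
    le_mul_of_one_le_left (sum_nonneg fun _ _ ↦ sq_nonneg _)
      (one_le_pow₀ (by exact_mod_cast hm))
  have hscaled : m ^ 2 * (2 * D) ≤ m ^ 2 * R := by linarith
  exact le_of_mul_le_mul_left hscaled (by positivity)

end Sums

section NormedSpace

theorem norm_image_sub_sub_fderiv_apply_le {E G : Type*} [NormedAddCommGroup E] [NormedSpace ℝ E]
    [NormedAddCommGroup G] [NormedSpace ℝ G] {f : E → G} {f' : E → E →L[ℝ] G} {L : ℝ}
    (hf : ∀ x, HasFDerivAt f (f' x) x) (hLip : ∀ x y, ‖f' x - f' y‖ ≤ L * ‖x - y‖) (x y p : E) :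
    ‖f y - f x - f' p (y - x)‖ ≤ L * (‖x - y‖ + ‖x - p‖) * ‖x - y‖ := by
  rcases eq_or_ne x y with rfl | hxy
  · simp
  have hL : 0 ≤ L := nonneg_of_mul_nonneg_left
    ((norm_nonneg _).trans (hLip x y)) (norm_pos_iff.2 (sub_ne_zero.2 hxy))
  rw [norm_sub_rev x y]
  refine (convex_segment x y).norm_image_sub_le_of_norm_hasFDerivWithin_le'
    (fun v _ ↦ (hf v).hasFDerivWithinAt) (fun v hv ↦ (hLip v p).trans ?_)
    (left_mem_segment ℝ x y) (right_mem_segment ℝ x y)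
  gcongr
  calc ‖v - p‖ ≤ ‖v - x‖ + ‖x - p‖ := norm_sub_le_norm_sub_add_norm_sub v x p
    _ ≤ ‖y - x‖ + ‖x - p‖ := by gcongr; exact norm_sub_le_of_mem_segment hv

theorem sum_mul_norm_centerMass_sub_sq_le {ι E : Type*} [SeminormedAddCommGroup E]
    [NormedSpace ℝ E] (s : Finset ι) {c : ι → ℝ} (x : ι → E) (u : E) (hc : ∀ i ∈ s, 0 ≤ c i) :
    (∑ i ∈ s, c i) * ‖s.centerMass c x - u‖ ^ 2 ≤ ∑ i ∈ s, c i * ‖x i - u‖ ^ 2 := by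
  rcases (Finset.sum_nonneg hc).eq_or_lt with hzero | hpos
  · rw [← hzero, zero_mul]
    exact Finset.sum_nonneg fun i hi ↦ mul_nonneg (hc i hi) (sq_nonneg _)
  have hconvex : ConvexOn ℝ Set.univ fun y : E ↦ ‖y - u‖ ^ 2 := by
    simp only [← dist_eq_norm]
    exact (convexOn_univ_dist u).pow (fun _ _ ↦ dist_nonneg) 2
  rw [← le_inv_mul_iff₀ hpos]
  exact hconvex.map_centerMass_le hc hpos fun i _ ↦ Set.mem_univ (x i)

theorem two_mul_inner_eq_extragradient {E : Type*} [SeminormedAddCommGroup E]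
    [InnerProductSpace ℝ E] (z w g u : E) :
    2 * ⟪g, w - u⟫
      = ‖z - u‖ ^ 2 - ‖z - g - u‖ ^ 2 + ‖z - g - w‖ ^ 2 - ‖z - w‖ ^ 2 := by
  have hsplit : ⟪g, w - u⟫ = ⟪z - u, g⟫ - ⟪z - w, g⟫ := by
    rw [← inner_sub_left, sub_sub_sub_cancel_left, real_inner_comm]
  rw [hsplit, sub_right_comm z g u, sub_right_comm z g w, norm_sub_sq_real (z - u),
    norm_sub_sq_real (z - w)]
  ring

end NormedSpace

/-- The LEN iterates of `F` with derivative `F'`, regularization `M` and period `m`. Here `w t`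
stands for the half-step iterate `z_{t+1/2}`, and `m * (t / m)` for the index `π(t)` at which the
derivative was last evaluated. -/
structure IsLENSequence {E : Type*} [NormedAddCommGroup E] [NormedSpace ℝ E] (F : E → E)
    (F' : E → E →L[ℝ] E) (M : ℝ) (m : ℕ) (z w : ℕ → E) (η : ℕ → ℝ) : Prop where
  regularization_pos : 0 < M
  period_pos : 0 < m
  half_step_ne (t : ℕ) : w t ≠ z t
  newton (t : ℕ) :
    F (z t) + F' (z (m * (t / m))) (w t - z t) + (M * ‖w t - z t‖) • (w t - z t) = 0
  stepsize (t : ℕ) : η t = 1 / (M * ‖z t - w t‖)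
  step (t : ℕ) : z (t + 1) = z t - η t • F (w t)

namespace IsLENSequence

section Normed

variable {E : Type*} [NormedAddCommGroup E] [NormedSpace ℝ E] {F : E → E} {F' : E → E →L[ℝ] E}
  {L M : ℝ} {m : ℕ} {z w : ℕ → E} {η : ℕ → ℝ}

theorem norm_sub_pos (h : IsLENSequence F F' M m z w η) (t : ℕ) : 0 < ‖z t - w t‖ :=
  norm_sub_pos_iff.2 (h.half_step_ne t).symm

theorem stepsize_pos (h : IsLENSequence F F' M m z w η) (t : ℕ) : 0 < η t := by
  rw [h.stepsize]
  exact one_div_pos.2 (mul_pos h.regularization_pos (h.norm_sub_pos t))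

theorem stepsize_mul_mul_norm_sub (h : IsLENSequence F F' M m z w η) (t : ℕ) :
    η t * (M * ‖z t - w t‖) = 1 := by
  rw [h.stepsize]
  exact one_div_mul_cancel (mul_pos h.regularization_pos (h.norm_sub_pos t)).ne'

theorem mul_stepsize (h : IsLENSequence F F' M m z w η) (t : ℕ) :
    M * η t = ‖z t - w t‖⁻¹ :=
  eq_inv_of_mul_eq_one_left (by linear_combination h.stepsize_mul_mul_norm_sub t)

theorem half_step_sub_succ_eq (h : IsLENSequence F F' M m z w η) (t : ℕ) :
    w t - z (t + 1) = η t • (F (w t) - F (z t) - F' (z (m * (t / m))) (w t - z t)) := by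
  have hresidual : F (w t) - F (z t) - F' (z (m * (t / m))) (w t - z t)
      = F (w t) + (M * ‖z t - w t‖) • (w t - z t) := by
    rw [sub_sub, eq_neg_of_add_eq_zero_left (h.newton t), sub_neg_eq_add, norm_sub_rev (w t)]
  rw [hresidual, smul_add, smul_smul, h.stepsize_mul_mul_norm_sub, one_smul, h.step]
  abel

theorem four_mul_dist_half_step_le (h : IsLENSequence F F' M m z w η)
    (hF : ∀ x, HasFDerivAt F (F' x) x) (hLip : ∀ x y, ‖F' x - F' y‖ ≤ L * ‖x - y‖)
    (hM : 4 * m * L ≤ M) (t : ℕ) :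
    4 * m * dist (z (t + 1)) (w t) ≤ dist (z t) (w t) + dist (z (m * (t / m))) (z t) := by
  rw [dist_comm, dist_comm (z (m * (t / m))), dist_eq_norm, dist_eq_norm, dist_eq_norm,
    h.half_step_sub_succ_eq, norm_smul, Real.norm_of_nonneg (h.stepsize_pos t).le]
  set r := ‖z t - w t‖
  set s := ‖z t - z (m * (t / m))‖
  have hη := h.stepsize_pos t
  calc 4 * m * (η t * ‖F (w t) - F (z t) - F' (z (m * (t / m))) (w t - z t)‖)
      ≤ 4 * m * (η t * (L * (r + s) * r)) := by
        gcongr; exact norm_image_sub_sub_fderiv_apply_le hF hLip _ _ _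
    _ = 4 * m * L * (η t * (r + s) * r) := by ring
    _ ≤ M * (η t * (r + s) * r) := by gcongr
    _ = η t * (M * r) * (r + s) := by ring
    _ = r + s := by rw [h.stepsize_mul_mul_norm_sub, one_mul]

theorem rpow_three_halves_le (h : IsLENSequence F F' M m z w η) {R : ℝ} {T : ℕ} (hR : 0 ≤ R)
    (hsum : ∑ t ∈ Finset.range T, ‖z t - w t‖ ^ 2 ≤ R ^ 2) :
    (T : ℝ) ^ ((3 : ℝ) / 2) ≤ M * (∑ t ∈ Finset.range T, η t) * R := by
  have hη : 0 ≤ M * ∑ t ∈ Finset.range T, η t :=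
    mul_nonneg h.regularization_pos.le (Finset.sum_nonneg fun t _ ↦ (h.stepsize_pos t).le)
  have hinv : ∑ t ∈ Finset.range T, ‖z t - w t‖⁻¹ = M * ∑ t ∈ Finset.range T, η t := by
    simp only [Finset.mul_sum, h.mul_stepsize]
  refine (sq_le_sq₀ (by positivity) (mul_nonneg hη hR)).1 ?_
  calc ((T : ℝ) ^ ((3 : ℝ) / 2)) ^ 2 = (T : ℝ) ^ 3 := by
        rw [← Real.rpow_mul_natCast T.cast_nonneg, ← Real.rpow_natCast]; norm_num
    _ ≤ (M * ∑ t ∈ Finset.range T, η t) ^ 2 * ∑ t ∈ Finset.range T, ‖z t - w t‖ ^ 2 := by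
        simpa [hinv] using card_pow_three_le_sum_inv_sq_mul_sum_sq (Finset.range T)
          fun t _ ↦ h.norm_sub_pos t
    _ ≤ (M * ∑ t ∈ Finset.range T, η t) ^ 2 * R ^ 2 := by gcongr
    _ = (M * (∑ t ∈ Finset.range T, η t) * R) ^ 2 := by ring

end Normed

variable {E : Type*} [NormedAddCommGroup E] [InnerProductSpace ℝ E] {F : E → E}
  {F' : E → E →L[ℝ] E} {L M : ℝ} {m : ℕ} {z w : ℕ → E} {η : ℕ → ℝ}

theorem two_mul_sum_stepsize_mul_inner_add_le (h : IsLENSequence F F' M m z w η)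
    (hF : ∀ x, HasFDerivAt F (F' x) x) (hLip : ∀ x y, ‖F' x - F' y‖ ≤ L * ‖x - y‖)
    (hM : 4 * m * L ≤ M) (u : E) (T : ℕ) :
    2 * ∑ t ∈ Finset.range T, η t * ⟪F (w t), w t - u⟫
      + 1 / 2 * ∑ t ∈ Finset.range T, ‖z t - w t‖ ^ 2 ≤ ‖z 0 - u‖ ^ 2 := by
  have habsorb := two_mul_sum_dist_sq_le_of_block_start z w h.period_pos
    (h.four_mul_dist_half_step_le hF hLip hM) T
  have hstep (t : ℕ) : 2 * (η t * ⟪F (w t), w t - u⟫)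
      = (‖z t - u‖ ^ 2 - ‖z (t + 1) - u‖ ^ 2) + ‖z (t + 1) - w t‖ ^ 2 - ‖z t - w t‖ ^ 2 := by
    rw [← real_inner_smul_left, h.step]
    exact two_mul_inner_eq_extragradient _ _ _ _
  simp only [dist_eq_norm] at habsorb
  rw [Finset.mul_sum]
  simp only [hstep, Finset.sum_sub_distrib, Finset.sum_add_distrib]
  rw [← Finset.sum_sub_distrib, Finset.sum_range_sub' (fun t ↦ ‖z t - u‖ ^ 2)]
  linarith [sq_nonneg ‖z T - u‖]

end IsLENSequence

theorem len_strongly_monotone_bound_general {E : Type*} [NormedAddCommGroup E]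
    [InnerProductSpace ℝ E] {F : E → E} {F' : E → E →L[ℝ] E} {L M μ : ℝ} {m : ℕ} {z w : ℕ → E}
    {η : ℕ → ℝ} (h : IsLENSequence F F' M m z w η) (hF : ∀ x, HasFDerivAt F (F' x) x)
    (hLip : ∀ x y, ‖F' x - F' y‖ ≤ L * ‖x - y‖) (hM : 4 * m * L ≤ M) (hμ : 0 ≤ μ) {u : E}
    (hmono : ∀ x, μ * ‖x - u‖ ^ 2 ≤ ⟪F x, x - u⟫) {T : ℕ} (hT : 1 ≤ T) :
    μ * ‖(Finset.range T).centerMass η w - u‖ ^ 2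
      ≤ M * ‖z 0 - u‖ ^ 3 / (T : ℝ) ^ ((3 : ℝ) / 2) := by
  set d := ‖z 0 - u‖
  set H := ∑ t ∈ Finset.range T, η t
  set V := ‖(Finset.range T).centerMass η w - u‖ ^ 2
  have henergy := h.two_mul_sum_stepsize_mul_inner_add_le hF hLip hM u T
  have hgap : μ * (H * V) ≤ ∑ t ∈ Finset.range T, η t * ⟪F (w t), w t - u⟫ := calc
    μ * (H * V) ≤ μ * ∑ t ∈ Finset.range T, η t * ‖w t - u‖ ^ 2 := by
      gcongr
      exact sum_mul_norm_centerMass_sub_sq_le _ w u fun t _ ↦ (h.stepsize_pos t).le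
    _ = ∑ t ∈ Finset.range T, η t * (μ * ‖w t - u‖ ^ 2) := by
      rw [Finset.mul_sum]; exact Finset.sum_congr rfl fun _ _ ↦ mul_left_comm _ _ _
    _ ≤ _ := Finset.sum_le_sum fun t _ ↦
      mul_le_mul_of_nonneg_left (hmono (w t)) (h.stepsize_pos t).le
  have hgap_nonneg : 0 ≤ μ * (H * V) := mul_nonneg hμ <|
    mul_nonneg (Finset.sum_nonneg fun t _ ↦ (h.stepsize_pos t).le) (sq_nonneg _)
  have hgap_le : 2 * (μ * (H * V)) ≤ d ^ 2 := by
    linarith [Finset.sum_nonneg fun t (_ : t ∈ Finset.range T) ↦ sq_nonneg ‖z t - w t‖]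
  have hpow : (T : ℝ) ^ ((3 : ℝ) / 2) ≤ M * H * (2 * d) :=
    h.rpow_three_halves_le (by positivity) (by linarith [sq_nonneg d])
  have hMpos := h.regularization_pos
  rw [le_div_iff₀ (Real.rpow_pos_of_pos (by exact_mod_cast hT) _)]
  calc μ * V * (T : ℝ) ^ ((3 : ℝ) / 2) ≤ μ * V * (M * H * (2 * d)) := by gcongr
    _ = M * d * (2 * (μ * (H * V))) := by ring
    _ ≤ M * d * d ^ 2 := by gcongr
    _ = M * d ^ 3 := by ring

/-- Under the LEN setup with a `μ`-strongly monotone operator, the averaged output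
satisfies `μ ‖z_out − z*‖² ≤ M ‖z_0 − z*‖³ / T^{3/2}`. -/
theorem len_strongly_monotone_bound
    {E : Type*} [NormedAddCommGroup E] [InnerProductSpace ℝ E] [FiniteDimensional ℝ E]
    (F : E → E) (F' : E → E →L[ℝ] E) (L M μ : ℝ) (m : ℕ) (hm : 1 ≤ m)
    (hdiff : ∀ x : E, HasFDerivAt F (F' x) x)
    (hLip : ∀ x y : E, ‖F' x - F' y‖ ≤ L * ‖x - y‖)
    (hμ : 0 < μ)
    (hmono : ∀ x y : E, μ * ‖x - y‖ ^ 2 ≤ ⟪F x - F y, x - y⟫)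
    (hMpos : 0 < M) (hM : 4 * (m : ℝ) * L ≤ M)
    (z w : ℕ → E) (η : ℕ → ℝ)
    (hne : ∀ t, w t ≠ z t)
    (hnewton : ∀ t, F (z t) + F' (z (m * (t / m))) (w t - z t)
        + (M * ‖w t - z t‖) • (w t - z t) = 0)
    (hη : ∀ t, η t = 1 / (M * ‖z t - w t‖))
    (hupdate : ∀ t, z (t + 1) = z t - η t • F (w t))
    (zstar : E) (hstar : F zstar = 0)
    (T : ℕ) (hT : 1 ≤ T)
    (zout : E)
    (hzout : zout = (∑ t ∈ Finset.range T, η t)⁻¹ • ∑ t ∈ Finset.range T, η t • w t) :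
    μ * ‖zout - zstar‖ ^ 2 ≤ M * ‖z 0 - zstar‖ ^ 3 / (T : ℝ) ^ ((3 : ℝ) / 2) := by
  subst hzout
  exact len_strongly_monotone_bound_general ⟨hMpos, hm, hne, hnewton, hη, hupdate⟩ hdiff hLip hM
    hμ.le (fun x ↦ by simpa only [hstar, sub_zero] using hmono x zstar) hT
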